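/- arXiv:2512.00779 — 6 statements merged into one kernel-verified Lean document; each statement's English description precedes it below -/
import Mathlib

section
/- Let γ > 0. There exists a constant c(γ) > 0, depending only on γ, such that for every integer n ≥ 2 with γ·ln n < n and every vector a ∈ ℝ^{4n} the following holds: if ξ is a random vector distributed according to the uniform probability measure on the Euclidean unit sphere S^{4n−1} ⊂ ℝ^{4n}, then Prob{ ⟨a, ξ⟩ ≥ √(γ·ln n / n) · ‖a‖ } ≥ c(γ) / ( n^{4.5γ} · √(ln n) ). -/
open MeasureTheory
open scoped RealInnerProductSpace

open ProbabilityTheory Filter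

/-! The mass that a rotation-invariant probability measure without an atom at the origin gives to a
circular cone depends on the cone's angle only, and not on the measure: draw two independent points,
one from each of two such measures, and compute in two ways the probability that they make at most
that angle. A spherical cap therefore has the standard Gaussian measure of the cone it spans.

In dimension `d` the Gaussian cone `t ‖x‖ ≤ ⟪e, x⟫` contains the event that `s ≤ ⟪e, x⟫` while the
component of `x` orthogonal to `e` has squared norm at most `2 d`, provided that
`2 d t² ≤ s² (1 - t²)`. By independence and Markov's inequality its probability is at least half the
tail of the one-dimensional Gaussian at `s`. For `d = 4 n` and `t² = γ ln n / n` one takes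
`s² = 8 γ ln n / (1 - t²)`, which is at most `9 γ ln n` for large `n`; hence the exponent `4.5 γ`.
The finitely many remaining `n` are absorbed by the constant. -/

section UnitSphere

variable {E : Type*} [NormedAddCommGroup E] [MeasurableSpace E] [BorelSpace E] {μ : Measure E}
  [IsProbabilityMeasure μ]

lemma ae_norm_eq_one_of_measure_sphere (hμ : μ (Metric.sphere 0 1) = 1) : ∀ᵐ x ∂μ, ‖x‖ = 1 := by
  have h : ∀ᵐ x ∂μ, x ∈ Metric.sphere (0 : E) 1 :=
    (prob_compl_eq_zero_iff Metric.isClosed_sphere.measurableSet).2 hμ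
  exact h.mono fun x hx => mem_sphere_zero_iff_norm.1 hx

lemma measure_singleton_zero_of_measure_sphere (hμ : μ (Metric.sphere 0 1) = 1) : μ {0} = 0 := by
  refine measure_eq_zero_iff_ae_notMem.2 ?_
  filter_upwards [ae_norm_eq_one_of_measure_sphere hμ] with x hx h₀
  simp [Set.mem_singleton_iff.1 h₀] at hx

end UnitSphere

section RotationInvariance

variable {E : Type*} [NormedAddCommGroup E] [InnerProductSpace ℝ E]

/-- The closed circular cone of half-angle `arccos t` around the axis `a`, apex included. -/
def circularCone (a : E) (t : ℝ) : Set E := {x | t * ‖a‖ * ‖x‖ ≤ ⟪a, x⟫}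

lemma mem_circularCone {a x : E} {t : ℝ} : x ∈ circularCone a t ↔ t * ‖a‖ * ‖x‖ ≤ ⟪a, x⟫ :=
  Iff.rfl

lemma mem_circularCone_comm {a x : E} {t : ℝ} : x ∈ circularCone a t ↔ a ∈ circularCone x t := by
  rw [mem_circularCone, mem_circularCone, real_inner_comm, mul_right_comm]

lemma circularCone_zero (t : ℝ) : circularCone (0 : E) t = Set.univ := by
  ext x
  simp [mem_circularCone]

lemma circularCone_smul_of_pos {r : ℝ} (hr : 0 < r) (a : E) (t : ℝ) :
    circularCone (r • a) t = circularCone a t := by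
  ext x
  rw [mem_circularCone, mem_circularCone, norm_smul, Real.norm_of_nonneg hr.le,
    real_inner_smul_left, mul_left_comm, mul_assoc, mul_le_mul_iff_right₀ hr]

lemma preimage_circularCone (T : E ≃ₗᵢ[ℝ] E) (a : E) (t : ℝ) :
    T ⁻¹' circularCone (T a) t = circularCone a t := by
  ext x
  simp only [Set.mem_preimage, mem_circularCone, LinearIsometryEquiv.norm_map,
    LinearIsometryEquiv.inner_map_map]

lemma mem_circularCone_of_norm_sq_le {e x : E} (he : ‖e‖ = 1) {s t r : ℝ} (hs : 0 < s)
    (hx : s ≤ ⟪e, x⟫) (hr : ‖x‖ ^ 2 ≤ ⟪e, x⟫ ^ 2 + r) (hst : t ^ 2 * (s ^ 2 + r) ≤ s ^ 2) :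
    x ∈ circularCone e t := by
  have hx_norm : ⟪e, x⟫ ≤ ‖x‖ := by simpa [he] using real_inner_le_norm e x
  have hx_sq : s ^ 2 ≤ ⟪e, x⟫ ^ 2 := by gcongr
  have hr₀ : 0 ≤ r := by nlinarith
  rw [mem_circularCone, he, mul_one]
  refine le_of_sq_le_sq ?_ (hs.le.trans hx)
  refine le_of_mul_le_mul_left ?_ (pow_pos hs 2)
  calc s ^ 2 * (t * ‖x‖) ^ 2 = t ^ 2 * (s ^ 2 * ‖x‖ ^ 2) := by ring
    _ ≤ t ^ 2 * (s ^ 2 * (⟪e, x⟫ ^ 2 + r)) := by gcongr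
    _ = t ^ 2 * (s ^ 2 * ⟪e, x⟫ ^ 2 + s ^ 2 * r) := by rw [mul_add]
    _ ≤ t ^ 2 * (s ^ 2 * ⟪e, x⟫ ^ 2 + ⟪e, x⟫ ^ 2 * r) := by gcongr
    _ = t ^ 2 * (s ^ 2 + r) * ⟪e, x⟫ ^ 2 := by ring
    _ ≤ s ^ 2 * ⟪e, x⟫ ^ 2 := by gcongr

variable [MeasurableSpace E] [BorelSpace E]

/-- Invariance under all linear isometries of `E`, reflections included. -/
def IsRotationInvariant (μ : Measure E) : Prop := ∀ T : E ≃ₗᵢ[ℝ] E, μ.map T = μ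

lemma measurableSet_circularCone [SecondCountableTopology E] (a : E) (t : ℝ) :
    MeasurableSet (circularCone a t) :=
  measurableSet_le (by fun_prop) (by fun_prop)

namespace IsRotationInvariant

variable {μ ν : Measure E}

lemma measure_circularCone_congr [SecondCountableTopology E]
    (hμ : IsRotationInvariant μ) {a b : E} (ha : a ≠ 0) (hb : b ≠ 0)
    (t : ℝ) : μ (circularCone a t) = μ (circularCone b t) := by
  have hr : 0 < ‖b‖ / ‖a‖ := div_pos (norm_pos_iff.2 hb) (norm_pos_iff.2 ha)
  have hnorm : ‖(‖b‖ / ‖a‖) • a‖ = ‖b‖ := by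
    rw [norm_smul, Real.norm_of_nonneg hr.le, div_mul_cancel₀ _ (norm_ne_zero_iff.2 ha)]
  set T : E ≃ₗᵢ[ℝ] E := (ℝ ∙ ((‖b‖ / ‖a‖) • a - b))ᗮ.reflection
  have hT : T ((‖b‖ / ‖a‖) • a) = b := Submodule.reflection_sub hnorm
  rw [← circularCone_smul_of_pos hr, ← preimage_circularCone T, hT,
    ← Measure.map_apply T.continuous.measurable (measurableSet_circularCone b t), hμ T]

lemma lintegral_measure_circularCone [SecondCountableTopology E]
    [IsProbabilityMeasure ν] (hμ : IsRotationInvariant μ) (hν : ν {0} = 0) {a : E} (ha : a ≠ 0)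
    (t : ℝ) : ∫⁻ x, μ (circularCone x t) ∂ν = μ (circularCone a t) := by
  have hne : ∀ᵐ x ∂ν, x ≠ 0 := measure_eq_zero_iff_ae_notMem.1 hν
  calc ∫⁻ x, μ (circularCone x t) ∂ν = ∫⁻ _, μ (circularCone a t) ∂ν :=
        lintegral_congr_ae (hne.mono fun x hx => hμ.measure_circularCone_congr hx ha t)
    _ = μ (circularCone a t) := by rw [lintegral_const, measure_univ, mul_one]

lemma measure_circularCone_eq [SecondCountableTopology E] [IsProbabilityMeasure μ]
    [IsProbabilityMeasure ν] (hμ : IsRotationInvariant μ) (hν : IsRotationInvariant ν)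
    (hμ₀ : μ {0} = 0) (hν₀ : ν {0} = 0) {a : E} (ha : a ≠ 0) (t : ℝ) :
    μ (circularCone a t) = ν (circularCone a t) := by
  have hmeas : MeasurableSet {p : E × E | p.2 ∈ circularCone p.1 t} :=
    measurableSet_le (f := fun p : E × E => t * ‖p.1‖ * ‖p.2‖) (by fun_prop) (by fun_prop)
  calc μ (circularCone a t) = ∫⁻ x, μ (circularCone x t) ∂ν :=
        (hμ.lintegral_measure_circularCone hν₀ ha t).symm
    _ = ν.prod μ {p | p.2 ∈ circularCone p.1 t} := (Measure.prod_apply hmeas).symm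
    _ = ∫⁻ y, ν {x | y ∈ circularCone x t} ∂μ := Measure.prod_apply_symm hmeas
    _ = ∫⁻ y, ν (circularCone y t) ∂μ := by simp only [mem_circularCone_comm, Set.ofPred_mem_eq]
    _ = ν (circularCone a t) := hν.lintegral_measure_circularCone hμ₀ ha t

end IsRotationInvariant

lemma measure_halfspace_eq_measure_circularCone {μ : Measure E} [IsProbabilityMeasure μ]
    (hμ : μ (Metric.sphere 0 1) = 1) (a : E) (t : ℝ) :
    μ {x | t * ‖a‖ ≤ ⟪a, x⟫} = μ (circularCone a t) := by
  refine measure_congr (eventuallyEq_set.2 ?_)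
  filter_upwards [ae_norm_eq_one_of_measure_sphere hμ] with x hx
  rw [mem_circularCone, hx, mul_one]

end RotationInvariance

section Gaussian

variable {E : Type*} [NormedAddCommGroup E] [InnerProductSpace ℝ E] [FiniteDimensional ℝ E]
  [MeasurableSpace E] [BorelSpace E]

lemma map_inner_stdGaussian (a : E) :
    (stdGaussian E).map (fun x => ⟪a, x⟫) = gaussianReal 0 (‖a‖₊ ^ 2) := by
  have h := IsGaussian.map_eq_gaussianReal (μ := stdGaussian E) (innerSL ℝ a)
  rwa [integral_strongDual_stdGaussian, variance_dual_stdGaussian, innerSL_apply_norm,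
    Real.toNNReal_pow (norm_nonneg a), norm_toNNReal] at h

lemma indepFun_starProjection_stdGaussian (K : Submodule ℝ E) :
    IndepFun K.starProjection Kᗮ.starProjection (stdGaussian E) := by
  refine HasGaussianLaw.indepFun_of_covariance_inner
    (IsGaussian.hasGaussianLaw_id.map_fun (K.starProjection.prod Kᗮ.starProjection))
    fun x y => ?_
  simp_rw [← Submodule.inner_starProjection_left_eq_right]
  rw [← covarianceBilin_apply_eq_cov IsGaussian.memLp_two_id, covarianceBilin_stdGaussian,
    innerSL_apply_apply]
  exact Submodule.inner_right_of_mem_orthogonal (K.starProjection_apply_mem x)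
    (Kᗮ.starProjection_apply_mem y)

lemma integral_norm_sq_stdGaussian :
    ∫ x, ‖x‖ ^ 2 ∂stdGaussian E = Module.finrank ℝ E := by
  set b := stdOrthonormalBasis ℝ E
  have hb (i) : ∫ x, ⟪b i, x⟫ ^ 2 ∂stdGaussian E = 1 := by
    have h := variance_dual_stdGaussian (innerSL ℝ (b i))
    rw [variance_of_integral_eq_zero (by fun_prop) (integral_strongDual_stdGaussian _)] at h
    simpa using h
  have hint (i) : Integrable (fun x => ⟪b i, x⟫ ^ 2) (stdGaussian E) :=
    (IsGaussian.memLp_dual (stdGaussian E) (innerSL ℝ (b i)) 2 (by simp)).integrable_sq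
  simp_rw [← b.sum_sq_inner_right]
  rw [integral_finsetSum _ fun i _ => hint i]
  simp [hb]

lemma integrable_norm_sq_stdGaussian : Integrable (fun x => ‖x‖ ^ 2) (stdGaussian E) :=
  (IsGaussian.memLp_two_id (μ := stdGaussian E)).integrable_norm_pow two_ne_zero

lemma half_le_stdGaussian_norm_sq_le [Nontrivial E] :
    1 / 2 ≤ (stdGaussian E).real {x | ‖x‖ ^ 2 ≤ 2 * Module.finrank ℝ E} := by
  set d := (Module.finrank ℝ E : ℝ)
  have hd : 0 < d := Nat.cast_pos.2 Module.finrank_pos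
  have hmarkov : 2 * d * (stdGaussian E).real {x | 2 * d ≤ ‖x‖ ^ 2} ≤ d :=
    (mul_meas_ge_le_integral_of_nonneg (ae_of_all _ fun x => sq_nonneg ‖x‖)
      integrable_norm_sq_stdGaussian (2 * d)).trans_eq integral_norm_sq_stdGaussian
  have hcompl : (stdGaussian E).real {x | ‖x‖ ^ 2 ≤ 2 * d}ᶜ ≤ 1 / 2 := by
    have hle : (stdGaussian E).real {x | ‖x‖ ^ 2 ≤ 2 * d}ᶜ ≤
        (stdGaussian E).real {x | 2 * d ≤ ‖x‖ ^ 2} := measureReal_mono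
        fun x (hx : ¬‖x‖ ^ 2 ≤ 2 * d) => (not_le.1 hx).le
    nlinarith
  rw [probReal_compl_eq_one_sub (measurableSet_le (by fun_prop) measurable_const)] at hcompl
  linarith

lemma stdGaussian_singleton_zero [Nontrivial E] : stdGaussian E {0} = 0 := by
  obtain ⟨a, ha⟩ := exists_ne (0 : E)
  have : NullSingletonClass (gaussianReal 0 (‖a‖₊ ^ 2)) :=
    nullSingletonClass_gaussianReal (by simpa)
  have h : (stdGaussian E).map (fun x => ⟪a, x⟫) {0} = 0 := by
    rw [map_inner_stdGaussian, measure_singleton]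
  rw [Measure.map_apply (by fun_prop) (measurableSet_singleton 0)] at h
  exact measure_mono_null (by simp) h

lemma stdGaussian_real_le_inner {e : E} (he : ‖e‖ = 1) (s : ℝ) :
    (stdGaussian E).real {x | s ≤ ⟪e, x⟫} = (gaussianReal 0 1).real (Set.Ici s) := by
  have h := map_inner_stdGaussian e
  rw [← norm_toNNReal, he, Real.toNNReal_one, one_pow] at h
  rw [← h, map_measureReal_apply (by fun_prop) measurableSet_Ici]
  rfl

lemma indepFun_inner_starProjection_stdGaussian {e : E} (he : ‖e‖ = 1) :
    IndepFun (fun x => ⟪e, x⟫) (ℝ ∙ e)ᗮ.starProjection (stdGaussian E) := by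
  have h := (indepFun_starProjection_stdGaussian (ℝ ∙ e)).comp (φ := fun x => ⟪e, x⟫)
    (by fun_prop) measurable_id
  simpa [Function.comp_def, Submodule.starProjection_unit_singleton ℝ he, real_inner_smul_right,
    he] using h

lemma gaussianReal_Ici_div_two_le_stdGaussian_circularCone {e : E} (he : ‖e‖ = 1) {s t : ℝ}
    (hs : 0 < s) (hst : t ^ 2 * (s ^ 2 + 2 * Module.finrank ℝ E) ≤ s ^ 2) :
    (gaussianReal 0 1).real (Set.Ici s) / 2 ≤ (stdGaussian E).real (circularCone e t) := by
  have : Nontrivial E := ⟨e, 0, norm_ne_zero_iff.1 (by simp [he])⟩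
  set d := (Module.finrank ℝ E : ℝ)
  set Q := (ℝ ∙ e)ᗮ.starProjection
  have hpyth (x : E) : ‖x‖ ^ 2 = ⟪e, x⟫ ^ 2 + ‖Q x‖ ^ 2 := by
    rw [(ℝ ∙ e).norm_sq_eq_add_norm_sq_starProjection,
      Submodule.starProjection_unit_singleton ℝ he, norm_smul, he, mul_one, Real.norm_eq_abs,
      sq_abs]
  have hhalf : 1 / 2 ≤ (stdGaussian E).real {x | ‖Q x‖ ^ 2 ≤ 2 * d} :=
    half_le_stdGaussian_norm_sq_le.trans <| measureReal_mono fun x (hx : ‖x‖ ^ 2 ≤ 2 * d) =>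
      show ‖Q x‖ ^ 2 ≤ 2 * d by linarith [hpyth x, sq_nonneg ⟪e, x⟫]
  have hindep : (stdGaussian E).real ({x | s ≤ ⟪e, x⟫} ∩ {x | ‖Q x‖ ^ 2 ≤ 2 * d}) =
      (stdGaussian E).real {x | s ≤ ⟪e, x⟫} * (stdGaussian E).real {x | ‖Q x‖ ^ 2 ≤ 2 * d} := by
    have h := (indepFun_inner_starProjection_stdGaussian he).measure_inter_preimage_eq_mul
      (Set.Ici s) {y | ‖y‖ ^ 2 ≤ 2 * d} measurableSet_Ici
      (measurableSet_le (by fun_prop) measurable_const)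
    simp only [measureReal_def, ← ENNReal.toReal_mul]
    exact congrArg ENNReal.toReal h
  calc (gaussianReal 0 1).real (Set.Ici s) / 2
      = (stdGaussian E).real {x | s ≤ ⟪e, x⟫} * (1 / 2) := by
        rw [stdGaussian_real_le_inner he, div_eq_mul_one_div]
    _ ≤ (stdGaussian E).real {x | s ≤ ⟪e, x⟫} *
          (stdGaussian E).real {x | ‖Q x‖ ^ 2 ≤ 2 * d} := by gcongr
    _ = (stdGaussian E).real ({x | s ≤ ⟪e, x⟫} ∩ {x | ‖Q x‖ ^ 2 ≤ 2 * d}) := hindep.symm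
    _ ≤ (stdGaussian E).real (circularCone e t) :=
        measureReal_mono fun x ⟨(hx : s ≤ ⟪e, x⟫), (hQ : ‖Q x‖ ^ 2 ≤ 2 * d)⟩ =>
          mem_circularCone_of_norm_sq_le he hs hx (by linarith [hpyth x]) hst

theorem gaussianReal_Ici_div_two_le_cap {μ : Measure E} [IsProbabilityMeasure μ]
    (hsphere : μ (Metric.sphere 0 1) = 1) (hμ : IsRotationInvariant μ) (a : E) {s t : ℝ}
    (hs : 0 < s) (hst : t ^ 2 * (s ^ 2 + 2 * Module.finrank ℝ E) ≤ s ^ 2) :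
    (gaussianReal 0 1).real (Set.Ici s) / 2 ≤ μ.real {x | t * ‖a‖ ≤ ⟪a, x⟫} := by
  obtain ⟨e, he⟩ : ∃ e : E, ‖e‖ = 1 := (ae_norm_eq_one_of_measure_sphere hsphere).exists
  have he₀ : e ≠ 0 := norm_ne_zero_iff.1 (by simp [he])
  have : Nontrivial E := ⟨e, 0, he₀⟩
  have hν : IsRotationInvariant (stdGaussian E) := stdGaussian_map
  have hμ₀ : μ {0} = 0 := measure_singleton_zero_of_measure_sphere hsphere
  calc (gaussianReal 0 1).real (Set.Ici s) / 2
      ≤ (stdGaussian E).real (circularCone e t) :=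
        gaussianReal_Ici_div_two_le_stdGaussian_circularCone he hs hst
    _ = μ.real (circularCone e t) := congrArg ENNReal.toReal <|
        hν.measure_circularCone_eq hμ stdGaussian_singleton_zero hμ₀ he₀ t
    _ ≤ μ.real (circularCone a t) := by
        rcases eq_or_ne a 0 with rfl | ha
        · rw [circularCone_zero]
          exact measureReal_mono (Set.subset_univ _)
        · exact (congrArg ENNReal.toReal (hμ.measure_circularCone_congr he₀ ha t)).le
    _ = μ.real {x | t * ‖a‖ ≤ ⟪a, x⟫} := congrArg ENNReal.toReal
        (measure_halfspace_eq_measure_circularCone hsphere a t).symm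

end Gaussian

section GaussianTail

lemma exp_div_le_gaussianReal_Ici {s : ℝ} (hs : 0 ≤ s) :
    (√(2 * Real.pi))⁻¹ * Real.exp (-(s ^ 2 + 3) / 2) / (s + 1) ≤
      (gaussianReal 0 1).real (Set.Ici s) := by
  set δ : ℝ := 1 / (s + 1)
  have hδ : 0 < δ := by positivity
  have hδ₁ : δ ≤ 1 := (div_le_one (by positivity)).2 (by linarith)
  have hsδ : (s + 1) * δ = 1 := mul_one_div_cancel (by positivity)
  have hpdf (x : ℝ) (hx : x ∈ Set.Icc s (s + δ)) :
      (√(2 * Real.pi))⁻¹ * Real.exp (-(s ^ 2 + 3) / 2) ≤ gaussianPDFReal 0 1 x := by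
    have hx₂ : x ^ 2 ≤ s ^ 2 + 3 := by
      have := hx.1
      have := hx.2
      nlinarith
    simp only [gaussianPDFReal, NNReal.coe_one, mul_one, sub_zero]
    gcongr
  calc (√(2 * Real.pi))⁻¹ * Real.exp (-(s ^ 2 + 3) / 2) / (s + 1)
      = (√(2 * Real.pi))⁻¹ * Real.exp (-(s ^ 2 + 3) / 2) * volume.real (Set.Icc s (s + δ)) := by
        rw [Real.volume_real_Icc_of_le (by linarith), add_sub_cancel_left, mul_one_div]
    _ ≤ ∫ x in Set.Icc s (s + δ), gaussianPDFReal 0 1 x :=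
        setIntegral_ge_of_const_le_real measurableSet_Icc measure_Icc_lt_top.ne hpdf
          (integrable_gaussianPDFReal 0 1).integrableOn
    _ = (gaussianReal 0 1).real (Set.Icc s (s + δ)) := by
        rw [measureReal_def, gaussianReal_apply_eq_integral 0 one_ne_zero, ENNReal.toReal_ofReal]
        exact integral_nonneg fun x => gaussianPDFReal_nonneg 0 1 x
    _ ≤ (gaussianReal 0 1).real (Set.Ici s) := measureReal_mono Set.Icc_subset_Ici_self

lemma exp_div_le_gaussianReal_Ici_mul {k : ℝ} (hk : 0 ≤ k) {y : ℝ} (hy : 1 ≤ y) :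
    (√(2 * Real.pi))⁻¹ * Real.exp (-3 / 2) / (k + 1) / (Real.exp ((k * y) ^ 2 / 2) * y) ≤
      (gaussianReal 0 1).real (Set.Ici (k * y)) := by
  refine le_trans ?_ (exp_div_le_gaussianReal_Ici (by positivity))
  have hexp : Real.exp (-((k * y) ^ 2 + 3) / 2) =
      Real.exp (-3 / 2) / Real.exp ((k * y) ^ 2 / 2) := by
    rw [← Real.exp_sub]
    ring_nf
  have hlin : k * y + 1 ≤ (k + 1) * y := by linarith
  rw [hexp]
  calc (√(2 * Real.pi))⁻¹ * Real.exp (-3 / 2) / (k + 1) / (Real.exp ((k * y) ^ 2 / 2) * y)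
      = (√(2 * Real.pi))⁻¹ * (Real.exp (-3 / 2) / Real.exp ((k * y) ^ 2 / 2)) /
          ((k + 1) * y) := by field_simp
    _ ≤ (√(2 * Real.pi))⁻¹ * (Real.exp (-3 / 2) / Real.exp ((k * y) ^ 2 / 2)) /
          (k * y + 1) := by gcongr

end GaussianTail

lemma exists_gt_forall_le_of_eventually {ι α : Type*} [LinearOrder α] {f : ι → α} {p : ι → Prop}
    {a c : α} (hc : a < c) (hf : ∀ i, p i → a < f i) (hev : ∀ᶠ i in cofinite, p i → c ≤ f i) :
    ∃ b, a < b ∧ ∀ i, p i → b ≤ f i := by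
  have hfin : {i | p i ∧ f i < c}.Finite := by simpa using eventually_cofinite.1 hev
  rcases Set.eq_empty_or_nonempty {i | p i ∧ f i < c} with hempty | hne
  · exact ⟨c, hc, fun i hi => not_lt.1 fun h => (hempty.subset ⟨hi, h⟩ : i ∈ (∅ : Set ι))⟩
  · obtain ⟨j, ⟨hj, hjc⟩, hmin⟩ := Set.exists_min_image _ f hfin hne
    refine ⟨f j, hf j hj, fun i hi => ?_⟩
    rcases lt_or_ge (f i) c with h | h
    · exact hmin i ⟨hi, h⟩
    · exact hjc.le.trans h

section Threshold

variable {γ : ℝ}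

lemma eventually_sqrt_threshold_le (hγ : 0 < γ) : ∀ᶠ n : ℕ in atTop,
    √(8 * (γ * Real.log n) / (1 - γ * Real.log n / n)) ≤ 3 * √γ * √(Real.log n) := by
  have hlog : ∀ᶠ n : ℕ in atTop, ‖Real.log n‖ ≤ 1 / (9 * γ) * ‖(n : ℝ)‖ :=
    (Real.isLittleO_log_id_atTop.comp_tendsto tendsto_natCast_atTop_atTop).bound (by positivity)
  filter_upwards [hlog, eventually_ge_atTop 1] with n hn hn₁
  have hn₀ : (0 : ℝ) < n := by exact_mod_cast hn₁
  have hL : 0 ≤ Real.log n := Real.log_natCast_nonneg n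
  have hu : γ * Real.log n / n ≤ 1 / 9 := by
    rw [Real.norm_of_nonneg hL, Real.norm_of_nonneg hn₀.le] at hn
    rw [div_le_iff₀ hn₀]
    calc γ * Real.log n ≤ γ * (1 / (9 * γ) * n) := by gcongr
      _ = 1 / 9 * n := by field_simp
  refine Real.sqrt_le_iff.2 ⟨by positivity, ?_⟩
  rw [div_le_iff₀ (by linarith), mul_pow, mul_pow, Real.sq_sqrt hγ.le, Real.sq_sqrt hL]
  nlinarith [mul_nonneg hγ.le hL]

lemma eventually_le_gaussianReal_Ici (hγ : 0 < γ) : ∀ᶠ n : ℕ in atTop,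
    (√(2 * Real.pi))⁻¹ * Real.exp (-3 / 2) / (3 * √γ + 1) ≤
      (n : ℝ) ^ (4.5 * γ) * √(Real.log n) * (gaussianReal 0 1).real
        (Set.Ici √(8 * (γ * Real.log n) / (1 - γ * Real.log n / n))) := by
  have hlog : ∀ᶠ n : ℕ in atTop, 1 ≤ Real.log n :=
    (Real.tendsto_log_atTop.comp tendsto_natCast_atTop_atTop).eventually_ge_atTop 1
  filter_upwards [eventually_sqrt_threshold_le hγ, hlog, eventually_gt_atTop 0] with n hs hL hn
  have hn₀ : (0 : ℝ) < n := by exact_mod_cast hn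
  have hpow : Real.exp ((3 * √γ * √(Real.log n)) ^ 2 / 2) = (n : ℝ) ^ (4.5 * γ) := by
    rw [mul_pow, mul_pow, Real.sq_sqrt hγ.le, Real.sq_sqrt (by linarith),
      Real.rpow_def_of_pos hn₀]
    ring_nf
  rw [← hpow, ← div_le_iff₀' (by positivity)]
  exact (exp_div_le_gaussianReal_Ici_mul (by positivity) (Real.one_le_sqrt.2 hL)).trans
    (measureReal_mono (Set.Ici_subset_Ici.2 hs))

lemma exists_pos_le_gaussianReal_Ici (hγ : 0 < γ) : ∃ c : ℝ, 0 < c ∧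
    ∀ n : ℕ, 2 ≤ n → γ * Real.log n < n →
      c / ((n : ℝ) ^ (4.5 * γ) * √(Real.log n)) ≤ (gaussianReal 0 1).real
        (Set.Ici √(8 * (γ * Real.log n) / (1 - γ * Real.log n / n))) := by
  have htail_pos (s : ℝ) (hs : 0 ≤ s) : 0 < (gaussianReal 0 1).real (Set.Ici s) :=
    lt_of_lt_of_le (by positivity) (exp_div_le_gaussianReal_Ici hs)
  have hweight_pos (n : ℕ) (hn : 2 ≤ n) : 0 < (n : ℝ) ^ (4.5 * γ) * √(Real.log n) := by
    have hL : 0 < Real.log n := Real.log_pos (by exact_mod_cast hn)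
    positivity
  have hev := eventually_le_gaussianReal_Ici hγ
  rw [← Nat.cofinite_eq_atTop] at hev
  obtain ⟨c, hc, h⟩ := exists_gt_forall_le_of_eventually
    (p := fun n : ℕ => 2 ≤ n ∧ γ * Real.log n < n) (by positivity)
    (fun n hn => mul_pos (hweight_pos n hn.1) (htail_pos _ (Real.sqrt_nonneg _)))
    (hev.mono fun _ hle _ => hle)
  exact ⟨c, hc, fun n hn hγn => (div_le_iff₀' (hweight_pos n hn)).2 (h n ⟨hn, hγn⟩)⟩

end Threshold

theorem stmt_1_general (γ : ℝ) (hγ : 0 < γ) :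
    ∃ c : ℝ, 0 < c ∧ ∀ n : ℕ, 2 ≤ n → γ * Real.log n < n →
      ∀ (E : Type*) [NormedAddCommGroup E] [InnerProductSpace ℝ E] [FiniteDimensional ℝ E]
        [MeasurableSpace E] [BorelSpace E], Module.finrank ℝ E ≤ 4 * n →
      ∀ (a : E) (μ : Measure E) [IsProbabilityMeasure μ],
        μ (Metric.sphere 0 1) = 1 → IsRotationInvariant μ →
        ENNReal.ofReal (c / ((n : ℝ) ^ (4.5 * γ) * √(Real.log n))) ≤
          μ {x | √(γ * Real.log n / n) * ‖a‖ ≤ ⟪a, x⟫} := by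
  obtain ⟨c, hc, htail⟩ := exists_pos_le_gaussianReal_Ici hγ
  refine ⟨c / 2, half_pos hc, fun n hn hγn E _ _ _ _ _ hdim a μ _ hsphere hμ => ?_⟩
  have hn₁ : (1 : ℝ) < n := by exact_mod_cast hn
  have hL : 0 < Real.log n := Real.log_pos hn₁
  set u := γ * Real.log n / n with hu
  have hu₁ : 0 < 1 - u := sub_pos.2 ((div_lt_one (by linarith)).2 hγn)
  set s := √(8 * (γ * Real.log n) / (1 - u)) with hs
  have hs_sq : s ^ 2 * (1 - u) = 8 * (γ * Real.log n) := by
    rw [hs, Real.sq_sqrt (by positivity), div_mul_cancel₀ _ hu₁.ne']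
  have hst : √u ^ 2 * (s ^ 2 + 2 * Module.finrank ℝ E) ≤ s ^ 2 := by
    calc √u ^ 2 * (s ^ 2 + 2 * Module.finrank ℝ E) ≤ u * (s ^ 2 + 2 * (4 * n)) := by
          rw [Real.sq_sqrt (by positivity)]
          gcongr
          exact_mod_cast hdim
      _ = u * s ^ 2 + 8 * (γ * Real.log n) := by rw [hu]; field_simp; ring
      _ = s ^ 2 := by linarith
  refine ENNReal.ofReal_le_of_le_toReal ?_
  calc c / 2 / ((n : ℝ) ^ (4.5 * γ) * √(Real.log n))
      = c / ((n : ℝ) ^ (4.5 * γ) * √(Real.log n)) / 2 := div_right_comm _ _ _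
    _ ≤ (gaussianReal 0 1).real (Set.Ici s) / 2 := by gcongr; exact htail n hn hγn
    _ ≤ _ := gaussianReal_Ici_div_two_le_cap hsphere hμ a (by positivity) hst

/-- for every `γ > 0` there is `c(γ) > 0` such that for every `n ≥ 2` with
`γ·ln n < n` and every `a ∈ ℝ^{4n}`, a uniform random point `ξ` of the unit sphere
`S^{4n−1} ⊂ ℝ^{4n}` (the unique rotation-invariant probability measure on the sphere)
satisfies `Prob{⟨a, ξ⟩ ≥ √(γ ln n / n)·‖a‖} ≥ c(γ) / (n^{4.5γ} √(ln n))`. -/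
theorem stmt_1 (γ : ℝ) (hγ : 0 < γ) :
    ∃ c : ℝ, 0 < c ∧
      ∀ n : ℕ, ∀ _hn : 2 ≤ n, ∀ _hγn : γ * Real.log n < n,
        ∀ a : EuclideanSpace ℝ (Fin (4 * n)),
        ∀ μ : Measure (EuclideanSpace ℝ (Fin (4 * n))),
          IsProbabilityMeasure μ →
          μ (Metric.sphere (0 : EuclideanSpace ℝ (Fin (4 * n))) 1) = 1 →
          (∀ T : EuclideanSpace ℝ (Fin (4 * n)) ≃ₗᵢ[ℝ] EuclideanSpace ℝ (Fin (4 * n)),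
            μ.map (fun x => T x) = μ) →
          ENNReal.ofReal (c / ((n : ℝ) ^ (4.5 * γ) * Real.sqrt (Real.log n))) ≤
            μ {x | Real.sqrt (γ * Real.log n / n) * ‖a‖ ≤ ⟪a, x⟫} := by
  obtain ⟨c, hc, h⟩ := stmt_1_general γ hγ
  exact ⟨c, hc, fun n hn hγn a μ _ => h n hn hγn _ (by simp) a μ⟩
end

section
/- Let V be a real vector space, d ≥ 1, and let f : V^d → ℝ be a symmetric multilinear map. Then for all x¹, …, x^d ∈ V there exist signs β₁, …, β_d ∈ {−1, 1} such that (∏_{i=1}^d β_i) · f(w, w, …, w) ≥ d^{−d} · d! · f(x¹, …, x^d), where w = (1/d)·Σ_{k=1}^d β_k x^k. (This is the sign-selection step, inequality (5.2), in the rounding analysis of the paper's Theorem 5.1.) -/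
/-!
Expanding `f (∑ k, ε k • x k, …, ∑ k, ε k • x k)` multilinearly gives one term for each map
`r : ι → ι`, with sign `∏ i, ε (r i)`. After multiplication by `∏ i, ε i` this sign is a character
of the group of sign vectors `ε`, trivial exactly when `r` is a permutation, so summing over `ε`
leaves only the terms `f (x (σ 1), …, x (σ d))`. Some `ε` does at least as well as the average.
-/

section Signs

variable {ι : Type*} [Fintype ι]

/-- The character `ε ↦ ∏ i, ε i * ε (r i)` of the group of sign vectors attached to a self-map `r`
of the index set. It is valued in `ℤ` so that its values can be summed. -/
def signCharacter (r : ι → ι) : (ι → ℤˣ) →* ℤ where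
  toFun ε := ((∏ i, ε i * ε (r i) : ℤˣ) : ℤ)
  map_one' := by simp
  map_mul' ε δ := by
    simp only [Pi.mul_apply, mul_mul_mul_comm (ε _) (δ _), Finset.prod_mul_distrib, Units.val_mul]

theorem signCharacter_apply (r : ι → ι) (ε : ι → ℤˣ) :
    signCharacter r ε = ((∏ i, ε i * ε (r i) : ℤˣ) : ℤ) :=
  rfl

theorem signCharacter_mulSingle_of_notMem_range [DecidableEq ι] {r : ι → ι} {j : ι}
    (hj : j ∉ Set.range r) : signCharacter r (Pi.mulSingle j (-1)) = -1 := by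
  have hr (i : ι) : (Pi.mulSingle j (-1) : ι → ℤˣ) (r i) = 1 :=
    Pi.mulSingle_eq_of_ne (fun h => hj ⟨i, h⟩) _
  simp only [signCharacter_apply, hr, mul_one, Finset.prod_pi_mulSingle', Finset.mem_univ,
    if_true, Units.val_neg, Units.val_one]

theorem signCharacter_eq_one_iff {r : ι → ι} : signCharacter r = 1 ↔ r.Bijective := by
  classical
  refine ⟨fun h => Function.Surjective.bijective_of_finite ?_, fun hr => ?_⟩
  · by_contra hr
    obtain ⟨j, hj⟩ := not_forall.mp hr
    have hneg := signCharacter_mulSingle_of_notMem_range hj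
    rw [h, MonoidHom.one_apply] at hneg
    norm_num at hneg
  · refine MonoidHom.ext fun ε => ?_
    rw [signCharacter_apply, Finset.prod_mul_distrib, hr.prod_comp ε, Int.units_mul_self,
      Units.val_one, MonoidHom.one_apply]

theorem sum_signCharacter [DecidableEq ι] (r : ι → ι) [Decidable r.Bijective] :
    ∑ ε, signCharacter r ε = if r.Bijective then 2 ^ Fintype.card ι else 0 := by
  classical
  simp only [sum_hom_units, signCharacter_eq_one_iff, Fintype.card_fun, Fintype.card_units_int,
    Nat.cast_ite, Nat.cast_pow, Nat.cast_ofNat, Nat.cast_zero]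

end Signs

section Polarization

variable {ι R M N : Type*} [Fintype ι] [Ring R] [AddCommGroup M] [Module R M]
  [AddCommGroup N] [Module R N]

theorem multilinearMap_signs_smul_univ (f : MultilinearMap R (fun _ : ι => M) N)
    (ε : ι → ℤˣ) (x : ι → M) : f (fun i => ε i • x i) = (∏ i, ε i) • f x := by
  simpa only [Units.smul_def, Units.coe_prod, MultilinearMap.coe_restrictScalars] using
    (f.restrictScalars ℤ).map_smul_univ (fun i => (ε i : ℤ)) x

variable [DecidableEq ι]

theorem prod_signs_smul_multilinearMap_sum (f : MultilinearMap R (fun _ : ι => M) N)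
    (ε : ι → ℤˣ) (x : ι → M) :
    (∏ i, ε i) • f (fun _ => ∑ k, ε k • x k) =
      ∑ r : ι → ι, signCharacter r ε • f (fun i => x (r i)) := by
  rw [f.map_sum, Finset.smul_sum]
  refine Finset.sum_congr rfl fun r _ => ?_
  rw [multilinearMap_signs_smul_univ f (fun i => ε (r i)), smul_smul, ← Finset.prod_mul_distrib,
    signCharacter_apply, Units.smul_def]

theorem multilinearMap_polarization (f : MultilinearMap R (fun _ : ι => M) N) (x : ι → M) :
    ∑ ε : ι → ℤˣ, (∏ i, ε i) • f (fun _ => ∑ k, ε k • x k) =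
      2 ^ Fintype.card ι • ∑ σ : Equiv.Perm ι, f (fun i => x (σ i)) := by
  classical
  calc
    _ = ∑ r : ι → ι, (∑ ε, signCharacter r ε) • f (fun i => x (r i)) := by
      simp only [prod_signs_smul_multilinearMap_sum, Finset.sum_smul]
      exact Finset.sum_comm
    _ = ∑ r : ι → ι, if r.Bijective then 2 ^ Fintype.card ι • f (fun i => x (r i)) else 0 := by
      simp only [sum_signCharacter, ite_smul, zero_smul, ← natCast_zsmul, Nat.cast_pow,
        Nat.cast_ofNat]
    _ = ∑ r : {r : ι → ι // r.Bijective}, 2 ^ Fintype.card ι • f (fun i => x (r.1 i)) := by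
      rw [← Finset.sum_filter]
      exact Finset.sum_subtype _ (by simp) _
    _ = ∑ σ : Equiv.Perm ι, 2 ^ Fintype.card ι • f (fun i => x (σ i)) :=
      Equiv.bijectiveEquiv.sum_comp
        fun σ : Equiv.Perm ι => 2 ^ Fintype.card ι • f (fun i => x (σ i))
    _ = _ := Finset.smul_sum.symm

theorem exists_signs_sum_perm_le [LinearOrder N] [IsOrderedAddMonoid N]
    (f : MultilinearMap R (fun _ : ι => M) N) (x : ι → M) :
    ∃ ε : ι → ℤˣ, ∑ σ : Equiv.Perm ι, f (fun i => x (σ i)) ≤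
      (∏ i, ε i) • f (fun _ => ∑ k, ε k • x k) := by
  have haverage : ∑ _ε : ι → ℤˣ, ∑ σ : Equiv.Perm ι, f (fun i => x (σ i)) =
      ∑ ε : ι → ℤˣ, (∏ i, ε i) • f (fun _ => ∑ k, ε k • x k) := by
    rw [multilinearMap_polarization f x, Finset.sum_const, Finset.card_univ, Fintype.card_fun,
      Fintype.card_units_int]
  obtain ⟨ε, -, hε⟩ := Finset.exists_le_of_sum_le Finset.univ_nonempty haverage.le
  exact ⟨ε, hε⟩

end Polarization

theorem stmt_10_general {ι 𝕜 V W : Type*} [Fintype ι] [DecidableEq ι]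
    [Field 𝕜] [LinearOrder 𝕜] [IsStrictOrderedRing 𝕜] [AddCommGroup V] [Module 𝕜 V]
    [AddCommGroup W] [LinearOrder W] [IsOrderedAddMonoid W] [Module 𝕜 W] [PosSMulMono 𝕜 W]
    (f : MultilinearMap 𝕜 (fun _ : ι => V) W) (x : ι → V) :
    ∃ β : ι → 𝕜, (∀ i, β i = 1 ∨ β i = -1) ∧
      ((Fintype.card ι : 𝕜) ^ Fintype.card ι)⁻¹ • ∑ σ : Equiv.Perm ι, f (fun i => x (σ i)) ≤
        (∏ i, β i) • f (fun _ => (1 / (Fintype.card ι : 𝕜)) • ∑ k, β k • x k) := by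
  obtain ⟨ε, hε⟩ := exists_signs_sum_perm_le f x
  refine ⟨fun i => ((ε i : ℤ) : 𝕜), fun i => ?_, ?_⟩
  · rcases Int.units_eq_one_or (ε i) with h | h <;> simp [h]
  · rw [f.map_smul_univ, Finset.prod_const, Finset.card_univ, one_div, inv_pow, smul_comm]
    simp only [← Int.cast_prod, ← Units.coe_prod, Int.cast_smul_eq_zsmul, ← Units.smul_def]
    exact smul_le_smul_of_nonneg_left hε (by positivity)

/-- sign-selection step, inequality (5.2): for a symmetric multilinear map
`f : V^d → ℝ` on a real vector space and any `x¹, …, x^d ∈ V` there are signs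
`β₁, …, β_d ∈ {−1,1}` with `(Πᵢ βᵢ)·f(w, …, w) ≥ d^{−d}·d!·f(x¹, …, x^d)`,
where `w = (1/d)·Σₖ βₖ xᵏ`. -/
theorem stmt_10 {V : Type*} [AddCommGroup V] [Module ℝ V] (d : ℕ) (hd : 1 ≤ d)
    (f : MultilinearMap ℝ (fun _ : Fin d => V) ℝ)
    (hsymm : ∀ (x : Fin d → V) (σ : Equiv.Perm (Fin d)), f (fun i => x (σ i)) = f x)
    (x : Fin d → V) :
    ∃ β : Fin d → ℝ, (∀ i, β i = 1 ∨ β i = -1) ∧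
      ((d : ℝ) ^ d)⁻¹ * (Nat.factorial d : ℝ) * f x ≤
        (∏ i, β i) * f (fun _ => (1 / (d : ℝ)) • ∑ k, β k • x k) := by
  simpa only [hsymm x, Finset.sum_const, Finset.card_univ, Fintype.card_perm, Fintype.card_fin,
    nsmul_eq_mul, smul_eq_mul, mul_assoc] using stmt_10_general f x
end

section
/- Let V be a real normed vector space, let d ≥ 1 be odd, and let f : V^d → ℝ be a symmetric multilinear map that is bounded on the unit ball in each coordinate (e.g. V finite dimensional). Then for all x¹, …, x^d ∈ V with ‖x^k‖ = 1 for each k, there exists x ∈ V with ‖x‖ = 1 such that f(x, x, …, x) ≥ d^{−d} · d! · f(x¹, …, x^d). (Deterministic core of the odd-degree case of the paper's Theorem 5.1: rounding an approximate multilinear solution to a homogeneous polynomial solution loses at most the factor d^{−d}·d!.) -/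
/-!
Expand `∑ ε, (∏ i, ε i) • f (∑ j, ε j • x j, …, ∑ j, ε j • x j)` over all sign vectors `ε`: the
coefficient of `f (x ∘ r)` is a sum of values of a character of the group of sign vectors, hence
vanishes unless `r` is a permutation, and symmetry gives the polarization identity with value
`2 ^ n * n ! • f x`. Therefore some summand is at least `n ! • f x`, and for odd `n` its sign
`∏ i, ε i` can be moved inside `f`. So `n ! • f x ≤ f (z, …, z)` for a signed sum `z` of the `x i`,
whose norm is at most `n` when the `x i` lie in the unit ball. If `z = ‖z‖ • u` with `‖u‖ = 1`, then
`f (z, …, z) ≤ n ^ n * |f (u, …, u)|`, and `|f (u, …, u)|` is the value of `f` at `u` or at `-u`.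
-/

section Polarization

open scoped Nat

variable {ι R M N : Type*} [Fintype ι] [Ring R] [AddCommGroup M] [Module R M]
  [AddCommGroup N] [Module R N]

theorem multilinear_map_units_smul_univ {E : ι → Type*} [∀ i, AddCommGroup (E i)]
    [∀ i, Module R (E i)] (f : MultilinearMap R E N) (ε : ι → ℤˣ) (x : ∀ i, E i) :
    f (fun i => ε i • x i) = (∏ i, ε i) • f x := by
  simpa only [Units.smul_def, Units.coe_prod, MultilinearMap.coe_restrictScalars] using
    (f.restrictScalars ℤ).map_smul_univ (fun i => (ε i : ℤ)) x

theorem multilinear_units_smul_diag_of_odd_card (hodd : Odd (Fintype.card ι))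
    (f : MultilinearMap R (fun _ : ι => M) N) (u : ℤˣ) (z : M) :
    f (fun _ => u • z) = u • f (fun _ => z) := by
  rw [multilinear_map_units_smul_univ f (fun _ => u), Finset.prod_const, Finset.card_univ,
    Int.units_pow_eq_pow_mod_two, Nat.odd_iff.1 hodd, pow_one]

theorem exists_units_smul_multilinear_diag_eq_abs [LinearOrder N] (hodd : Odd (Fintype.card ι))
    (f : MultilinearMap R (fun _ : ι => M) N) (z : M) :
    ∃ u : ℤˣ, f (fun _ => u • z) = |f (fun _ => z)| := by
  rcases abs_choice (f fun _ => z) with h | h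
  · exact ⟨1, by rw [one_smul, h]⟩
  · exact ⟨-1, by rw [multilinear_units_smul_diag_of_odd_card hodd, Units.neg_smul, one_smul, h]⟩

section SignSums

variable [DecidableEq ι]

theorem sum_prod_signs_mul_prod_comp_eq_zero {κ : Type*} [Fintype κ] {r : κ → ι}
    (hr : ¬ Function.Surjective r) :
    ∑ ε : ι → ℤˣ, (((∏ i, ε i) * ∏ k, ε (r k) : ℤˣ) : ℤ) = 0 := by
  obtain ⟨j, hj⟩ : ∃ j, ∀ k, r k ≠ j := by simpa [Function.Surjective] using hr
  let χ : (ι → ℤˣ) →* ℤˣ :=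
    { toFun ε := (∏ i, ε i) * ∏ k, ε (r k)
      map_one' := by simp
      map_mul' ε δ := by simp only [Pi.mul_apply, Finset.prod_mul_distrib, mul_mul_mul_comm] }
  have hχ : χ (Pi.mulSingle j (-1)) = -1 := by
    simp [χ, Pi.mulSingle_eq_of_ne (hj _)]
  refine sum_hom_units_eq_zero ((Units.coeHom ℤ).comp χ) fun h => ?_
  simpa [hχ] using DFunLike.congr_fun h (Pi.mulSingle j (-1))

theorem prod_signs_smul_multilinear_signed_sum (f : MultilinearMap R (fun _ : ι => M) N)
    (x : ι → M) (ε : ι → ℤˣ) :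
    (∏ i, ε i) • f (fun _ => ∑ j, ε j • x j) =
      ∑ r : ι → ι, (((∏ i, ε i) * ∏ i, ε (r i) : ℤˣ) : ℤ) • f (x ∘ r) := by
  rw [f.map_sum, Finset.smul_sum]
  refine Finset.sum_congr rfl fun r _ => ?_
  rw [multilinear_map_units_smul_univ f (fun i => ε (r i)), smul_smul]
  rfl

theorem multilinear_polarization (f : MultilinearMap R (fun _ : ι => M) N)
    (hsymm : ∀ (x : ι → M) (σ : Equiv.Perm ι), f (fun i => x (σ i)) = f x) (x : ι → M) :
    ∑ ε : ι → ℤˣ, (∏ i, ε i) • f (fun _ => ∑ j, ε j • x j) =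
      (2 ^ Fintype.card ι * (Fintype.card ι)!) • f x := by
  let coeff (r : ι → ι) : ℤ := ∑ ε : ι → ℤˣ, (((∏ i, ε i) * ∏ i, ε (r i) : ℤˣ) : ℤ)
  have coeff_perm (σ : Equiv.Perm ι) : coeff σ = 2 ^ Fintype.card ι := by
    simp only [coeff, Equiv.prod_comp σ, Int.units_mul_self]
    simp
  have coeff_of_notMem_range (r : ι → ι) (hr : r ∉ Set.range fun σ : Equiv.Perm ι => ⇑σ) :
      coeff r = 0 :=
    sum_prod_signs_mul_prod_comp_eq_zero fun hsurj =>
      hr ⟨Equiv.ofBijective r (Function.Surjective.bijective_of_finite hsurj), rfl⟩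
  calc ∑ ε : ι → ℤˣ, (∏ i, ε i) • f (fun _ => ∑ j, ε j • x j)
      = ∑ r : ι → ι, coeff r • f (x ∘ r) := by
        simp only [prod_signs_smul_multilinear_signed_sum, coeff, Finset.sum_smul]
        exact Finset.sum_comm
    _ = ∑ σ : Equiv.Perm ι, coeff σ • f (x ∘ σ) :=
        (Fintype.sum_of_injective _ DFunLike.coe_injective _ _
          (fun r hr => by rw [coeff_of_notMem_range r hr, zero_smul]) fun _ => rfl).symm
    _ = ∑ _σ : Equiv.Perm ι, 2 ^ Fintype.card ι • f x :=
        Finset.sum_congr rfl fun σ _ => by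
          rw [coeff_perm, ← hsymm x σ]
          exact_mod_cast natCast_zsmul (f (x ∘ σ)) (2 ^ Fintype.card ι)
    _ = (2 ^ Fintype.card ι * (Fintype.card ι)!) • f x := by
        rw [Finset.sum_const, Finset.card_univ, Fintype.card_perm, smul_smul, mul_comm]

end SignSums

theorem exists_factorial_smul_le_multilinear_signed_sum [LinearOrder N] [IsOrderedAddMonoid N]
    (hodd : Odd (Fintype.card ι)) (f : MultilinearMap R (fun _ : ι => M) N)
    (hsymm : ∀ (x : ι → M) (σ : Equiv.Perm ι), f (fun i => x (σ i)) = f x) (x : ι → M) :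
    ∃ ε : ι → ℤˣ, (Fintype.card ι)! • f x ≤ f (fun _ => ∑ j, ε j • x j) := by
  classical
  have hsum : ∑ _ε : ι → ℤˣ, (Fintype.card ι)! • f x ≤
      ∑ ε : ι → ℤˣ, (∏ i, ε i) • f (fun _ => ∑ j, ε j • x j) := by
    rw [multilinear_polarization f hsymm x]
    simp [mul_smul]
  obtain ⟨ε, -, hε⟩ := Finset.exists_le_of_sum_le Finset.univ_nonempty hsum
  refine ⟨fun j => (∏ i, ε i) * ε j, ?_⟩
  simpa only [mul_smul, ← Finset.smul_sum, multilinear_units_smul_diag_of_odd_card hodd] using hε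

end Polarization

theorem norm_sum_units_zsmul_le {ι E : Type*} [SeminormedAddCommGroup E] (s : Finset ι)
    (ε : ι → ℤˣ) (x : ι → E) : ‖∑ i ∈ s, ε i • x i‖ ≤ ∑ i ∈ s, ‖x i‖ := by
  simpa only [norm_units_zsmul] using norm_sum_le s fun i => ε i • x i

section OddDegree

open scoped Nat

variable {ι V : Type*} [Fintype ι] [NormedAddCommGroup V] [NormedSpace ℝ V]

theorem exists_norm_eq_one_and_eq_norm_smul [Nontrivial V] (z : V) :
    ∃ u : V, ‖u‖ = 1 ∧ z = ‖z‖ • u := by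
  rcases eq_or_ne z 0 with rfl | hz
  · obtain ⟨u, hu⟩ := exists_norm_eq V zero_le_one
    exact ⟨u, hu, by simp⟩
  · exact ⟨NormedSpace.normalize z, NormedSpace.norm_normalize_eq_one_iff.2 hz,
      (NormedSpace.norm_smul_normalize z).symm⟩

theorem exists_norm_eq_one_multilinear_diag_le_pow_mul [Nontrivial V]
    (hodd : Odd (Fintype.card ι)) (f : MultilinearMap ℝ (fun _ : ι => V) ℝ) {z : V} {r : ℝ}
    (hz : ‖z‖ ≤ r) :
    ∃ y : V, ‖y‖ = 1 ∧ f (fun _ => z) ≤ r ^ Fintype.card ι * f (fun _ => y) := by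
  obtain ⟨u, hu, hzu⟩ := exists_norm_eq_one_and_eq_norm_smul z
  obtain ⟨s, hs⟩ := exists_units_smul_multilinear_diag_eq_abs hodd f u
  refine ⟨s • u, by rw [norm_units_zsmul, hu], ?_⟩
  calc f (fun _ => z) = ‖z‖ ^ Fintype.card ι * f (fun _ => u) := by
        conv_lhs => rw [hzu]
        simpa using f.map_smul_univ (fun _ => ‖z‖) (fun _ => u)
    _ ≤ ‖z‖ ^ Fintype.card ι * |f (fun _ => u)| := by gcongr; exact le_abs_self _
    _ ≤ r ^ Fintype.card ι * |f (fun _ => u)| := by gcongr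
    _ = r ^ Fintype.card ι * f (fun _ => s • u) := by rw [hs]

theorem stmt_11_general [Nontrivial V] (hodd : Odd (Fintype.card ι))
    (f : MultilinearMap ℝ (fun _ : ι => V) ℝ)
    (hsymm : ∀ (x : ι → V) (σ : Equiv.Perm ι), f (fun i => x (σ i)) = f x)
    (x : ι → V) (hx : ∀ i, ‖x i‖ ≤ 1) :
    ∃ y : V, ‖y‖ = 1 ∧
      ((Fintype.card ι : ℝ) ^ Fintype.card ι)⁻¹ * ((Fintype.card ι)! : ℝ) * f x ≤
        f (fun _ => y) := by
  obtain ⟨ε, hε⟩ := exists_factorial_smul_le_multilinear_signed_sum hodd f hsymm x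
  have hnorm : ‖∑ i, ε i • x i‖ ≤ Fintype.card ι :=
    (norm_sum_units_zsmul_le _ ε x).trans <| by
      simpa using Finset.sum_le_card_nsmul Finset.univ (fun i => ‖x i‖) 1 fun i _ => hx i
  obtain ⟨y, hy, hle⟩ := exists_norm_eq_one_multilinear_diag_le_pow_mul hodd f hnorm
  have hcard : (0 : ℝ) < Fintype.card ι := by exact_mod_cast hodd.pos
  refine ⟨y, hy, ?_⟩
  rw [mul_assoc, inv_mul_le_iff₀ (pow_pos hcard _), ← nsmul_eq_mul]
  exact hε.trans hle

end OddDegree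

/-- deterministic core of the odd-degree case of Theorem 5.1: for odd `d`
and a symmetric multilinear map `f : V^d → ℝ` on a real normed space, bounded on the unit
ball in each coordinate, and any unit vectors `x¹, …, x^d`, there is a unit vector `x` with
`f(x, …, x) ≥ d^{−d}·d!·f(x¹, …, x^d)`. -/
theorem stmt_11 {V : Type*} [NormedAddCommGroup V] [NormedSpace ℝ V] (d : ℕ)
    (hd : 1 ≤ d) (hodd : Odd d)
    (f : MultilinearMap ℝ (fun _ : Fin d => V) ℝ)
    (hsymm : ∀ (x : Fin d → V) (σ : Equiv.Perm (Fin d)), f (fun i => x (σ i)) = f x)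
    (hbdd : ∃ C : ℝ, ∀ x : Fin d → V, (∀ i, ‖x i‖ ≤ 1) → |f x| ≤ C)
    (x : Fin d → V) (hx : ∀ k, ‖x k‖ = 1) :
    ∃ y : V, ‖y‖ = 1 ∧
      ((d : ℝ) ^ d)⁻¹ * (Nat.factorial d : ℝ) * f x ≤ f (fun _ => y) := by
  have : Nontrivial V := nontrivial_of_ne (x ⟨0, hd⟩) 0 (norm_ne_zero_iff.1 (by simp [hx]))
  simpa using stmt_11_general (by simpa using hodd) f hsymm x fun k => (hx k).le
end

section
/- Let V be a real normed vector space, let d ≥ 2 be even, and let f : V^d → ℝ be a symmetric multilinear map. Let m ∈ ℝ satisfy m ≤ f(x, x, …, x) for every x ∈ V with ‖x‖ ≤ 1. Then for all x¹, …, x^d ∈ V with ‖x^k‖ = 1 for each k, there exist signs β₁, …, β_d ∈ {−1, 1} with ∏_{i=1}^d β_i = 1 such that, setting w = (1/d)·Σ_{k=1}^d β_k x^k (which satisfies ‖w‖ ≤ 1), f(w, w, …, w) − m ≥ 2 · d^{−d} · d! · f(x¹, …, x^d). (Deterministic core of the even-degree case, inequality (5.4), of the paper's Theorem 5.1.) 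-/
/-!
Expand `f(∑ βₖ xₖ, …, ∑ βₖ xₖ)` by multilinearity and sum it against the character
`β ↦ ∏ βᵢ` of the sign group `{±1}^ι`. By orthogonality of characters only the terms indexed by
permutations survive, so the signed sum is `2 ^ |ι| ∑_σ f(x ∘ σ)`. Shifting `f` by the constant `m`
does not change this sum, because the character has mean zero, but makes all the values
nonnegative. The terms with `∏ βᵢ = -1` then only lower the sum, so some `β` in the half with
`∏ βᵢ = 1` has a value at least twice the signed average. Taking `xₖ / |ι|` in place of `xₖ` keeps
all the points `∑ βₖ xₖ` in the unit ball.
-/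

open Finset

section SignSums

variable {α : Type*} [Fintype α]

theorem sum_sign_smul_eq_sub {M : Type*} [AddCommGroup M] (χ : α → ℤˣ) (g : α → M) :
    ∑ a, χ a • g a = ∑ a with χ a = 1, g a - ∑ a with χ a ≠ 1, g a := by
  rw [← sum_filter_add_sum_filter_not univ (χ · = 1), sub_eq_add_neg, ← sum_neg_distrib]
  congr 1 <;> refine sum_congr rfl fun a ha ↦ ?_
  · rw [(mem_filter.mp ha).2, one_smul]
  · rw [Int.units_ne_iff_eq_neg.mp (mem_filter.mp ha).2, Units.neg_smul, one_smul]

theorem two_mul_card_filter_eq_one {χ : α → ℤˣ} (hχ : ∑ a, (χ a : ℤ) = 0) :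
    2 * #{a | χ a = 1} = Fintype.card α := by
  have hbalanced : (#{a | χ a = 1} : ℤ) = #{a | χ a ≠ 1} := by
    simpa [Units.smul_def, hχ, sub_eq_zero, eq_comm (a := (0 : ℤ))] using
      sum_sign_smul_eq_sub χ fun _ ↦ (1 : ℤ)
  have htotal : #{a | χ a = 1} + #{a | χ a ≠ 1} = Fintype.card α :=
    card_filter_add_card_filter_not _
  omega

theorem exists_sign_eq_one_and_two_mul_sum_le [Nonempty α] {K : Type*} [CommRing K]
    [LinearOrder K] [IsStrictOrderedRing K] {χ : α → ℤˣ} (hχ : ∑ a, (χ a : ℤ) = 0) {g : α → K}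
    (hg : ∀ a, 0 ≤ g a) :
    ∃ a, χ a = 1 ∧ 2 * ∑ b, χ b • g b ≤ Fintype.card α * g a := by
  have hcard := two_mul_card_filter_eq_one hχ
  have hne : ({a | χ a = 1} : Finset α).Nonempty := by
    rw [← card_pos]
    have := Fintype.card_pos (α := α)
    omega
  have hle : ∑ b, χ b • g b ≤ ∑ a with χ a = 1, g a := by
    rw [sum_sign_smul_eq_sub]
    exact sub_le_self _ (sum_nonneg fun a _ ↦ hg a)
  obtain ⟨a, ha, hga⟩ := exists_le_of_sum_le hne (f := fun _ ↦ 2 * ∑ b, χ b • g b)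
    (g := fun a ↦ Fintype.card α * g a) <| by
      calc ∑ a with χ a = 1, 2 * ∑ b, χ b • g b
          = Fintype.card α * ∑ b, χ b • g b := by
            rw [sum_const, nsmul_eq_mul, ← hcard]
            push_cast
            ring
        _ ≤ Fintype.card α * ∑ a with χ a = 1, g a := by gcongr
        _ = ∑ a with χ a = 1, Fintype.card α * g a := mul_sum _ _ _
  exact ⟨a, (mem_filter.mp ha).2, hga⟩

end SignSums

section SignCharacters

theorem sum_coe_signHom_eq_zero {G : Type*} [Group G] [Fintype G] {χ : G →* ℤˣ} (hχ : χ ≠ 1) :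
    ∑ g, (χ g : ℤ) = 0 := by
  refine sum_hom_units_eq_zero ((Units.coeHom ℤ).comp χ) fun h ↦ hχ ?_
  ext g
  exact DFunLike.congr_fun h g

variable {ι : Type*} [Fintype ι] [DecidableEq ι]

theorem sum_coe_prod_sign_eq_zero [Nonempty ι] : ∑ β : ι → ℤˣ, ((∏ i, β i : ℤˣ) : ℤ) = 0 := by
  let χ : (ι → ℤˣ) →* ℤˣ := ∏ i, Pi.evalMonoidHom _ i
  have hχ : χ ≠ 1 := fun h ↦ by
    obtain ⟨j⟩ := ‹Nonempty ι›
    simpa [χ] using DFunLike.congr_fun h (Pi.mulSingle j (-1))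
  simpa [χ] using sum_coe_signHom_eq_zero hχ

theorem sum_coe_prod_sign_mul_prod_sign_comp_eq_zero {r : ι → ι} (hr : ¬ r.Surjective) :
    ∑ β : ι → ℤˣ, (((∏ i, β i) * ∏ i, β (r i) : ℤˣ) : ℤ) = 0 := by
  let χ : (ι → ℤˣ) →* ℤˣ := (∏ i, Pi.evalMonoidHom _ i) * ∏ i, Pi.evalMonoidHom _ (r i)
  have hχ : χ ≠ 1 := fun h ↦ by
    obtain ⟨j, hj⟩ := not_forall.mp hr
    have hr_ne (i : ι) : r i ≠ j := fun hi ↦ hj ⟨i, hi⟩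
    simpa [χ, Pi.mulSingle_eq_of_ne (hr_ne _)] using DFunLike.congr_fun h (Pi.mulSingle j (-1))
  simpa [χ] using sum_coe_signHom_eq_zero hχ

end SignCharacters

theorem sum_perm_eq_sum_of_not_surjective {ι M : Type*} [Fintype ι] [DecidableEq ι]
    [AddCommMonoid M] {g : (ι → ι) → M} (hg : ∀ r, ¬ Function.Surjective r → g r = 0) :
    ∑ σ : Equiv.Perm ι, g σ = ∑ r, g r := by
  refine sum_of_injOn (fun σ ↦ ⇑σ) DFunLike.coe_injective.injOn (by simp) (fun r _ hr ↦ ?_)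
    fun _ _ ↦ rfl
  refine hg r fun hsurj ↦ hr ?_
  exact ⟨Equiv.ofBijective r (Finite.surjective_iff_bijective.mp hsurj), by simp, rfl⟩

section Polarization

variable {ι R V M : Type*} [Fintype ι] [DecidableEq ι] [Ring R] [AddCommGroup V] [Module R V]
  [AddCommGroup M] [Module R M]

theorem map_sum_sign_smul_eq_sum (f : MultilinearMap R (fun _ : ι ↦ V) M) (β : ι → ℤˣ)
    (x : ι → V) :
    f (fun _ ↦ ∑ k, β k • x k) = ∑ r : ι → ι, (∏ i, β (r i)) • f (fun i ↦ x (r i)) := by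
  rw [f.map_sum fun _ k ↦ β k • x k]
  refine sum_congr rfl fun r _ ↦ ?_
  simpa [Units.smul_def] using
    (f.restrictScalars ℤ).map_smul_univ (fun i ↦ (β (r i) : ℤ)) fun i ↦ x (r i)

theorem sum_prod_sign_smul_map_sum_sign_smul (f : MultilinearMap R (fun _ : ι ↦ V) M)
    (x : ι → V) :
    ∑ β : ι → ℤˣ, (∏ i, β i) • f (fun _ ↦ ∑ k, β k • x k) =
      2 ^ Fintype.card ι • ∑ σ : Equiv.Perm ι, f (fun i ↦ x (σ i)) := by
  let coeff (r : ι → ι) : ℤ := ∑ β : ι → ℤˣ, (((∏ i, β i) * ∏ i, β (r i) : ℤˣ) : ℤ)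
  have hcoeff_perm (σ : Equiv.Perm ι) : coeff σ = 2 ^ Fintype.card ι := by
    have hprod (β : ι → ℤˣ) : (∏ i, β i) * ∏ i, β (σ i) = 1 := by
      rw [Equiv.prod_comp σ β, Int.units_mul_self]
    simp only [coeff, hprod]
    simp
  calc ∑ β : ι → ℤˣ, (∏ i, β i) • f (fun _ ↦ ∑ k, β k • x k)
      = ∑ r : ι → ι, coeff r • f (fun i ↦ x (r i)) := by
        simp only [map_sum_sign_smul_eq_sum, smul_sum, smul_smul, coeff, sum_smul]
        exact sum_comm
    _ = ∑ σ : Equiv.Perm ι, coeff σ • f (fun i ↦ x (σ i)) := by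
        refine (sum_perm_eq_sum_of_not_surjective fun r hr ↦ ?_).symm
        rw [show coeff r = 0 from sum_coe_prod_sign_mul_prod_sign_comp_eq_zero hr, zero_smul]
    _ = 2 ^ Fintype.card ι • ∑ σ : Equiv.Perm ι, f (fun i ↦ x (σ i)) := by
        simp only [hcoeff_perm, smul_sum]
        exact sum_congr rfl fun σ _ ↦ by rw [← natCast_zsmul]; norm_cast

theorem exists_prod_sign_eq_one_and_two_mul_sum_perm_le [Nonempty ι] {K : Type*} [CommRing K]
    [LinearOrder K] [IsStrictOrderedRing K] [Module R K] (f : MultilinearMap R (fun _ : ι ↦ V) K)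
    (x : ι → V) {m : K} (hm : ∀ β : ι → ℤˣ, m ≤ f fun _ ↦ ∑ k, β k • x k) :
    ∃ β : ι → ℤˣ, ∏ i, β i = 1 ∧
      2 * ∑ σ : Equiv.Perm ι, f (fun i ↦ x (σ i)) ≤ f (fun _ ↦ ∑ k, β k • x k) - m := by
  have hshift : ∑ β : ι → ℤˣ, (∏ i, β i) • (f (fun _ ↦ ∑ k, β k • x k) - m) =
      2 ^ Fintype.card ι * ∑ σ : Equiv.Perm ι, f (fun i ↦ x (σ i)) := by
    have hconst : ∑ β : ι → ℤˣ, (∏ i, β i) • m = 0 := by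
      simp only [Units.smul_def, ← sum_smul, sum_coe_prod_sign_eq_zero, zero_smul]
    rw [← sub_zero (2 ^ _ * _), ← hconst]
    simp only [smul_sub, sum_sub_distrib, sum_prod_sign_smul_map_sum_sign_smul]
    simp
  obtain ⟨β, hβ, hle⟩ := exists_sign_eq_one_and_two_mul_sum_le
    (χ := fun β : ι → ℤˣ ↦ ∏ i, β i) sum_coe_prod_sign_eq_zero fun β ↦ sub_nonneg.mpr (hm β)
  refine ⟨β, hβ, le_of_mul_le_mul_left ?_ (pow_pos two_pos (Fintype.card ι))⟩
  rw [hshift, mul_left_comm] at hle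
  simpa using hle

end Polarization

theorem norm_average_sign_smul_le_one {ι V : Type*} [Fintype ι] [SeminormedAddCommGroup V]
    [NormedSpace ℝ V] (β : ι → ℤˣ) {x : ι → V} (hx : ∀ k, ‖x k‖ ≤ 1) :
    ‖(1 / (Fintype.card ι : ℝ)) • ∑ k, β k • x k‖ ≤ 1 := by
  have hsum : ‖∑ k, β k • x k‖ ≤ Fintype.card ι := by
    calc ‖∑ k, β k • x k‖ ≤ ∑ _k : ι, (1 : ℝ) := norm_sum_le_of_le _ fun k _ ↦
          (norm_units_zsmul (β k) (x k)).trans_le (hx k)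
      _ = Fintype.card ι := by simp
  rw [norm_smul, Real.norm_of_nonneg (by positivity), one_div, inv_mul_eq_div]
  exact div_le_one_of_le₀ hsum (Nat.cast_nonneg _)

theorem stmt_12_general {ι V : Type*} [Fintype ι] [DecidableEq ι] [Nonempty ι]
    [SeminormedAddCommGroup V] [NormedSpace ℝ V] (f : MultilinearMap ℝ (fun _ : ι ↦ V) ℝ)
    {m : ℝ} (hm : ∀ y : V, ‖y‖ ≤ 1 → m ≤ f (fun _ ↦ y)) {x : ι → V} (hx : ∀ k, ‖x k‖ ≤ 1) :
    ∃ β : ι → ℝ, (∀ i, β i = 1 ∨ β i = -1) ∧ (∏ i, β i) = 1 ∧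
      ‖(1 / (Fintype.card ι : ℝ)) • ∑ k, β k • x k‖ ≤ 1 ∧
      2 * ((Fintype.card ι : ℝ) ^ Fintype.card ι)⁻¹ *
          ∑ σ : Equiv.Perm ι, f (fun i ↦ x (σ i)) ≤
        f (fun _ ↦ (1 / (Fintype.card ι : ℝ)) • ∑ k, β k • x k) - m := by
  set c : ℝ := 1 / (Fintype.card ι : ℝ) with hc
  have hsmul (β : ι → ℤˣ) : ∑ k, β k • c • x k = c • ∑ k, β k • x k := by
    rw [smul_sum]
    exact sum_congr rfl fun k _ ↦ smul_comm _ _ _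
  have hball (β : ι → ℤˣ) : ‖c • ∑ k, β k • x k‖ ≤ 1 := norm_average_sign_smul_le_one β hx
  have hcast (β : ι → ℤˣ) : ∑ k, ((β k : ℤ) : ℝ) • x k = ∑ k, β k • x k := by
    simp only [Units.smul_def, Int.cast_smul_eq_zsmul]
  have hperm (σ : Equiv.Perm ι) : f (fun i ↦ c • x (σ i)) =
      ((Fintype.card ι : ℝ) ^ Fintype.card ι)⁻¹ * f (fun i ↦ x (σ i)) := by
    simpa [hc] using f.map_smul_univ (fun _ ↦ c) fun i ↦ x (σ i)
  obtain ⟨β, hβ, hle⟩ := exists_prod_sign_eq_one_and_two_mul_sum_perm_le f (fun k ↦ c • x k)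
    (m := m) fun β ↦ hm _ (hsmul β ▸ hball β)
  simp only [hperm, hsmul, ← mul_sum, ← mul_assoc] at hle
  refine ⟨fun i ↦ ((β i : ℤ) : ℝ), fun i ↦ ?_, ?_, ?_, ?_⟩
  · rcases Int.units_eq_one_or (β i) with h | h <;> simp [h]
  · simp only [← Int.cast_prod, ← Units.coe_prod, hβ, Units.val_one, Int.cast_one]
  · rw [hcast]
    exact hball β
  · rw [hcast]
    exact hle

/-- deterministic core of the even-degree case, inequality (5.4): for even
`d ≥ 2`, a symmetric multilinear map `f : V^d → ℝ` on a real normed space, a lower bound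
`m ≤ f(x,…,x)` valid on the unit ball, and unit vectors `x¹, …, x^d`, there are signs
`β₁, …, β_d ∈ {−1,1}` with `Πᵢ βᵢ = 1` such that `w = (1/d)·Σₖ βₖ xᵏ` satisfies `‖w‖ ≤ 1`
and `f(w, …, w) − m ≥ 2·d^{−d}·d!·f(x¹, …, x^d)`. -/
theorem stmt_12 {V : Type*} [NormedAddCommGroup V] [NormedSpace ℝ V] (d : ℕ)
    (hd : 2 ≤ d) (heven : Even d)
    (f : MultilinearMap ℝ (fun _ : Fin d => V) ℝ)
    (hsymm : ∀ (x : Fin d → V) (σ : Equiv.Perm (Fin d)), f (fun i => x (σ i)) = f x)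
    (m : ℝ) (hm : ∀ y : V, ‖y‖ ≤ 1 → m ≤ f (fun _ => y))
    (x : Fin d → V) (hx : ∀ k, ‖x k‖ = 1) :
    ∃ β : Fin d → ℝ, (∀ i, β i = 1 ∨ β i = -1) ∧ (∏ i, β i) = 1 ∧
      ‖(1 / (d : ℝ)) • ∑ k, β k • x k‖ ≤ 1 ∧
      2 * ((d : ℝ) ^ d)⁻¹ * (Nat.factorial d : ℝ) * f x ≤
        f (fun _ => (1 / (d : ℝ)) • ∑ k, β k • x k) - m := by
  have : Nonempty (Fin d) := ⟨⟨0, by omega⟩⟩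
  simpa [hsymm, Fintype.card_perm, mul_assoc] using stmt_12_general f hm fun k ↦ (hx k).le
end

section
/- Let a = (a₀, a₁, a₂, a₃), b = (b₀, b₁, b₂, b₃), c = (c₀, c₁, c₂, c₃) ∈ ℝ⁴ have nonnegative entries and satisfy a₀² + a₁² + a₂² + a₃² = b₀² + b₁² + b₂² + b₃² = c₀² + c₁² + c₂² + c₃² = 1. Then (a₀b₀ + a₁b₁ + a₂b₂ + a₃b₃)c₀ + (a₁b₀ + a₀b₁ + a₃b₂ + a₂b₃)c₁ + (a₂b₀ + a₃b₁ + a₀b₂ + a₁b₃)c₂ + (a₃b₀ + a₂b₁ + a₁b₂ + a₀b₃)c₃ ≤ 2, and equality is attained at a = b = c = (1/2, 1/2, 1/2, 1/2). (This is the evaluation of the optimal value of problem (C.3) in Appendix C of the paper, giving the upper bound 2√(n₁n₂n₃) in Proposition 6.1.) -/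
/-!
Each coefficient of `c` in the form is an inner product of `a` with a permutation of `b`, hence at
most `‖a‖ ‖b‖` in absolute value. A second use of the Cauchy–Schwarz inequality, for the vector of
these coefficients and `c`, gives the bound `√4 * ‖a‖ * ‖b‖ * ‖c‖`.
-/

section PermTrilinearForm

open Finset

variable {ι κ R : Type*} [Fintype ι] [Fintype κ]

/-- The trilinear form `∑ k, ⟨a, b ∘ σ k⟩ c k` attached to a family `σ` of permutations. When `σ`
lists the rows of a Latin square, it is the sum of the monomials `a i * b j * c k` over the cells
`(k, i)` with entry `j`. -/
def permTrilinearForm [CommSemiring R] (σ : κ → Equiv.Perm ι) (a b : ι → R) (c : κ → R) : R :=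
  ∑ k, (∑ i, a i * b (σ k i)) * c k

lemma sq_sum_mul_comp_perm_le [CommRing R] [LinearOrder R] [IsStrictOrderedRing R]
    (σ : Equiv.Perm ι) (a b : ι → R) :
    (∑ i, a i * b (σ i)) ^ 2 ≤ (∑ i, a i ^ 2) * ∑ i, b i ^ 2 :=
  calc (∑ i, a i * b (σ i)) ^ 2
    _ ≤ (∑ i, a i ^ 2) * ∑ i, b (σ i) ^ 2 := sum_mul_sq_le_sq_mul_sq _ _ _
    _ = (∑ i, a i ^ 2) * ∑ i, b i ^ 2 := by rw [Equiv.sum_comp σ fun i ↦ b i ^ 2]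

lemma sq_permTrilinearForm_le [CommRing R] [LinearOrder R] [IsStrictOrderedRing R]
    (σ : κ → Equiv.Perm ι) (a b : ι → R) (c : κ → R) :
    permTrilinearForm σ a b c ^ 2 ≤
      Fintype.card κ * ((∑ i, a i ^ 2) * ∑ i, b i ^ 2) * ∑ k, c k ^ 2 :=
  calc permTrilinearForm σ a b c ^ 2
    _ ≤ (∑ k, (∑ i, a i * b (σ k i)) ^ 2) * ∑ k, c k ^ 2 := sum_mul_sq_le_sq_mul_sq _ _ _
    _ ≤ (∑ _k : κ, (∑ i, a i ^ 2) * ∑ i, b i ^ 2) * ∑ k, c k ^ 2 := by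
      gcongr with k
      exact sq_sum_mul_comp_perm_le (σ k) a b
    _ = Fintype.card κ * ((∑ i, a i ^ 2) * ∑ i, b i ^ 2) * ∑ k, c k ^ 2 := by
      rw [sum_const, card_univ, nsmul_eq_mul]

lemma permTrilinearForm_const [CommSemiring R] (σ : κ → Equiv.Perm ι) (x y z : R) :
    permTrilinearForm σ (fun _ ↦ x) (fun _ ↦ y) (fun _ ↦ z) =
      Fintype.card κ * (Fintype.card ι * (x * y) * z) := by
  simp only [permTrilinearForm, sum_const, card_univ, nsmul_eq_mul]

theorem stmt_17_general [Nonempty ι] (σ : κ → Equiv.Perm ι) :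
    (∀ (a b : ι → ℝ) (c : κ → ℝ),
      ∑ i, a i ^ 2 = 1 → ∑ i, b i ^ 2 = 1 → ∑ k, c k ^ 2 = 1 →
        permTrilinearForm σ a b c ≤ √(Fintype.card κ)) ∧
    permTrilinearForm σ (fun _ ↦ 1 / √(Fintype.card ι)) (fun _ ↦ 1 / √(Fintype.card ι))
      (fun _ ↦ 1 / √(Fintype.card κ)) = √(Fintype.card κ) := by
  refine ⟨fun a b c ha hb hc ↦ Real.le_sqrt_of_sq_le ?_, ?_⟩
  · simpa only [ha, hb, hc, mul_one] using sq_permTrilinearForm_le σ a b c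
  · have coeff_eq_one :
        (Fintype.card ι : ℝ) * (1 / √(Fintype.card ι) * (1 / √(Fintype.card ι))) = 1 := by
      rw [div_mul_div_comm, one_mul, Real.mul_self_sqrt (Nat.cast_nonneg _),
        mul_one_div_cancel (Nat.cast_ne_zero.mpr Fintype.card_ne_zero)]
    rw [permTrilinearForm_const, coeff_eq_one, one_mul, mul_one_div, Real.div_sqrt]

end PermTrilinearForm

/-- The regular representation of the Klein four-group on `Fin 4`, which permutes the indices in
the multiplication table of `1, i, j, k` up to sign. -/
def kleinFourPerm : Fin 4 → Equiv.Perm (Fin 4) :=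
  ![1, c[0, 1] * c[2, 3], c[0, 2] * c[1, 3], c[0, 3] * c[1, 2]]

lemma permTrilinearForm_kleinFourPerm {R : Type*} [CommSemiring R] (a b c : Fin 4 → R) :
    permTrilinearForm kleinFourPerm a b c =
      (a 0 * b 0 + a 1 * b 1 + a 2 * b 2 + a 3 * b 3) * c 0 +
        (a 1 * b 0 + a 0 * b 1 + a 3 * b 2 + a 2 * b 3) * c 1 +
        (a 2 * b 0 + a 3 * b 1 + a 0 * b 2 + a 1 * b 3) * c 2 +
        (a 3 * b 0 + a 2 * b 1 + a 1 * b 2 + a 0 * b 3) * c 3 := by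
  have latin_square : ∀ k i, kleinFourPerm k i =
      ![![0, 1, 2, 3], ![1, 0, 3, 2], ![2, 3, 0, 1], ![3, 2, 1, 0]] k i := by decide
  simp only [permTrilinearForm, latin_square, Fin.sum_univ_four, Matrix.cons_val]
  ring

/-- optimal value of problem (C.3): for nonnegative `a, b, c ∈ ℝ⁴` with
`Σ aₜ² = Σ bₜ² = Σ cₜ² = 1`, the 16-term form built from the real parts of the commutative
quaternion multiplication table (with all signs made positive) is at most `2`, with
equality at `a = b = c = (1/2, 1/2, 1/2, 1/2)`. -/
theorem stmt_17 :
    (∀ a₀ a₁ a₂ a₃ b₀ b₁ b₂ b₃ c₀ c₁ c₂ c₃ : ℝ,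
      0 ≤ a₀ → 0 ≤ a₁ → 0 ≤ a₂ → 0 ≤ a₃ →
      0 ≤ b₀ → 0 ≤ b₁ → 0 ≤ b₂ → 0 ≤ b₃ →
      0 ≤ c₀ → 0 ≤ c₁ → 0 ≤ c₂ → 0 ≤ c₃ →
      a₀ ^ 2 + a₁ ^ 2 + a₂ ^ 2 + a₃ ^ 2 = 1 →
      b₀ ^ 2 + b₁ ^ 2 + b₂ ^ 2 + b₃ ^ 2 = 1 →
      c₀ ^ 2 + c₁ ^ 2 + c₂ ^ 2 + c₃ ^ 2 = 1 →
      (a₀ * b₀ + a₁ * b₁ + a₂ * b₂ + a₃ * b₃) * c₀ +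
        (a₁ * b₀ + a₀ * b₁ + a₃ * b₂ + a₂ * b₃) * c₁ +
        (a₂ * b₀ + a₃ * b₁ + a₀ * b₂ + a₁ * b₃) * c₂ +
        (a₃ * b₀ + a₂ * b₁ + a₁ * b₂ + a₀ * b₃) * c₃ ≤ 2) ∧
    (((1:ℝ)/2 * (1/2) + 1/2 * (1/2) + 1/2 * (1/2) + 1/2 * (1/2)) * (1/2) +
      (1/2 * (1/2) + 1/2 * (1/2) + 1/2 * (1/2) + 1/2 * (1/2)) * (1/2) +
      (1/2 * (1/2) + 1/2 * (1/2) + 1/2 * (1/2) + 1/2 * (1/2)) * (1/2) +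
      (1/2 * (1/2) + 1/2 * (1/2) + 1/2 * (1/2) + 1/2 * (1/2)) * (1/2) = 2) := by
  have sqrt_card : √(Fintype.card (Fin 4) : ℝ) = 2 := by norm_num
  have ⟨bound, attained⟩ := stmt_17_general kleinFourPerm
  simp only [sqrt_card, permTrilinearForm_kleinFourPerm, Fin.sum_univ_four] at bound attained
  exact ⟨fun a₀ a₁ a₂ a₃ b₀ b₁ b₂ b₃ c₀ c₁ c₂ c₃ _ _ _ _ _ _ _ _ _ _ _ _ ↦
    bound ![a₀, a₁, a₂, a₃] ![b₀, b₁, b₂, b₃] ![c₀, c₁, c₂, c₃], attained⟩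
end

section
/- Let n₁, n₂, n₃ ≥ 1. For u ∈ ℝ^m write s(u) = Σ_i u_i. Let x₀, x₁, x₂, x₃ ∈ ℝ^{n₁}, y₀, y₁, y₂, y₃ ∈ ℝ^{n₂}, z₀, z₁, z₂, z₃ ∈ ℝ^{n₃} satisfy Σ_{t=0}^3 ‖x_t‖² = Σ_{t=0}^3 ‖y_t‖² = Σ_{t=0}^3 ‖z_t‖² = 1. Then s(x₀)s(y₀)s(z₀) − s(x₁)s(y₁)s(z₀) + s(x₂)s(y₂)s(z₀) − s(x₃)s(y₃)s(z₀) − s(x₁)s(y₀)s(z₁) − s(x₀)s(y₁)s(z₁) − s(x₃)s(y₂)s(z₁) − s(x₂)s(y₃)s(z₁) + s(x₂)s(y₀)s(z₂) − s(x₃)s(y₁)s(z₂) + s(x₀)s(y₂)s(z₂) − s(x₁)s(y₃)s(z₂) − s(x₃)s(y₀)s(z₃) − s(x₂)s(y₁)s(z₃) − s(x₁)s(y₂)s(z₃) − s(x₀)s(y₃)s(z₃) ≤ 2·√(n₁ n₂ n₃). (This is Proposition 6.1 of the paper in real components: for the commutative quaternion tensor 𝓕 with real part the all-ones tensor 𝟙_{n₁×n₂×n₃}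 and zero imaginary parts, the optimal value of the sphere-constrained multilinear problem (F) with d = 3 is at most v_upper = 2√(n₁n₂n₃).) -/
/-!
With `ā = a₀ - a₁i + a₂j - a₃k` one has `a ā = N(a) + J(a) j`, where `N(a) = a₀² + a₁² + a₂² + a₃²`
and `J(a) = 2(a₀a₂ + a₁a₃)`. Since `j² = 1`, multiplicativity of `a ↦ a ā` gives
`N(ab) = N(a)N(b) + J(a)J(b)`, and `|J| ≤ N` turns this into `N(ab) ≤ 2 N(a)N(b)`.
The multilinear form of the all-ones tensor is the real part of the product of the three entry sums,
so `(Re F)² ≤ N(abc) ≤ 4 N(a)N(b)N(c)`, and Cauchy–Schwarz bounds `N` of each entry sum by the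
number of entries.
-/

/-- A commutative quaternion `re + imI * i + imJ * j + imK * k` with coefficients in `R`, where
`i² = k² = -1`, `j² = 1`, `ij = k`, `jk = i` and `ki = -j`. -/
structure CommQuaternion (R : Type*) where
  re : R
  imI : R
  imJ : R
  imK : R

namespace CommQuaternion

section CommRing

variable {R : Type*} [CommRing R]

instance instMul : Mul (CommQuaternion R) where
  mul a b :=
    { re := a.re * b.re - a.imI * b.imI + a.imJ * b.imJ - a.imK * b.imK
      imI := a.re * b.imI + a.imI * b.re + a.imJ * b.imK + a.imK * b.imJ
      imJ := a.re * b.imJ + a.imJ * b.re - a.imI * b.imK - a.imK * b.imI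
      imK := a.re * b.imK + a.imK * b.re + a.imI * b.imJ + a.imJ * b.imI }

lemma re_mul (a b : CommQuaternion R) :
    (a * b).re = a.re * b.re - a.imI * b.imI + a.imJ * b.imJ - a.imK * b.imK := rfl

lemma imI_mul (a b : CommQuaternion R) :
    (a * b).imI = a.re * b.imI + a.imI * b.re + a.imJ * b.imK + a.imK * b.imJ := rfl

lemma imJ_mul (a b : CommQuaternion R) :
    (a * b).imJ = a.re * b.imJ + a.imJ * b.re - a.imI * b.imK - a.imK * b.imI := rfl

lemma imK_mul (a b : CommQuaternion R) :
    (a * b).imK = a.re * b.imK + a.imK * b.re + a.imI * b.imJ + a.imJ * b.imI := rfl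

/-- The squared Euclidean modulus `N(a)`, i.e. the real part of `a ā`. -/
def normSq (a : CommQuaternion R) : R :=
  a.re ^ 2 + a.imI ^ 2 + a.imJ ^ 2 + a.imK ^ 2

/-- The `j`-coefficient `J(a)` of `a ā`, which measures how far `normSq` is from being
multiplicative. -/
def normJ (a : CommQuaternion R) : R :=
  2 * (a.re * a.imJ + a.imI * a.imK)

lemma normSq_mul (a b : CommQuaternion R) :
    normSq (a * b) = normSq a * normSq b + normJ a * normJ b := by
  simp only [normSq, normJ, re_mul, imI_mul, imJ_mul, imK_mul]
  ring

end CommRing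

section Order

variable {R : Type*} [CommRing R] [LinearOrder R] [IsStrictOrderedRing R]

lemma normSq_nonneg (a : CommQuaternion R) : 0 ≤ normSq a := by
  unfold normSq
  positivity

lemma re_sq_le_normSq (a : CommQuaternion R) : a.re ^ 2 ≤ normSq a := by
  have h : 0 ≤ a.imI ^ 2 + a.imJ ^ 2 + a.imK ^ 2 := by positivity
  unfold normSq
  linarith

lemma abs_normJ_le_normSq (a : CommQuaternion R) : |normJ a| ≤ normSq a := by
  have h_add : 0 ≤ (a.re + a.imJ) ^ 2 + (a.imI + a.imK) ^ 2 := by positivity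
  have h_sub : 0 ≤ (a.re - a.imJ) ^ 2 + (a.imI - a.imK) ^ 2 := by positivity
  unfold normJ normSq
  exact abs_le.mpr ⟨by linear_combination h_add, by linear_combination h_sub⟩

lemma normSq_mul_le (a b : CommQuaternion R) : normSq (a * b) ≤ 2 * normSq a * normSq b := by
  have hJ : normJ a * normJ b ≤ normSq a * normSq b :=
    calc normJ a * normJ b ≤ |normJ a| * |normJ b| := (le_abs_self _).trans_eq (abs_mul _ _)
      _ ≤ normSq a * normSq b :=
        mul_le_mul (abs_normJ_le_normSq a) (abs_normJ_le_normSq b) (abs_nonneg _) (normSq_nonneg a)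
  linear_combination normSq_mul a b + hJ

lemma re_mul_mul_sq_le (a b c : CommQuaternion R) :
    (a * b * c).re ^ 2 ≤ 2 ^ 2 * (normSq a * normSq b * normSq c) :=
  calc (a * b * c).re ^ 2 ≤ normSq (a * b * c) := re_sq_le_normSq _
    _ ≤ 2 * normSq (a * b) * normSq c := normSq_mul_le _ _
    _ ≤ 2 * (2 * normSq a * normSq b) * normSq c := by
      gcongr
      · exact normSq_nonneg c
      · exact normSq_mul_le a b
    _ = 2 ^ 2 * (normSq a * normSq b * normSq c) := by ring

end Order

lemma re_mul_mul_le_two_mul_sqrt (a b c : CommQuaternion ℝ) :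
    (a * b * c).re ≤ 2 * √(normSq a * normSq b * normSq c) := by
  have h := Real.le_sqrt_of_sq_le (re_mul_mul_sq_le a b c)
  rwa [Real.sqrt_mul (by norm_num), Real.sqrt_sq (by norm_num)] at h

end CommQuaternion

section EntrySum

variable {ι : Type*} [Fintype ι]

lemma sum_apply_sq_le_card_mul_norm_sq (u : EuclideanSpace ℝ ι) :
    (∑ i, u i) ^ 2 ≤ Fintype.card ι * ‖u‖ ^ 2 := by
  rw [EuclideanSpace.real_norm_sq_eq]
  exact sq_sum_le_card_mul_sum_sq

/-- The sum of the entries of the commutative quaternion vector `x₀ + x₁i + x₂j + x₃k`, which is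
given by its real component vectors. -/
def CommQuaternion.entrySum (x₀ x₁ x₂ x₃ : EuclideanSpace ℝ ι) : CommQuaternion ℝ where
  re := ∑ i, x₀ i
  imI := ∑ i, x₁ i
  imJ := ∑ i, x₂ i
  imK := ∑ i, x₃ i

lemma CommQuaternion.normSq_entrySum_le (x₀ x₁ x₂ x₃ : EuclideanSpace ℝ ι) :
    normSq (entrySum x₀ x₁ x₂ x₃) ≤
      Fintype.card ι * (‖x₀‖ ^ 2 + ‖x₁‖ ^ 2 + ‖x₂‖ ^ 2 + ‖x₃‖ ^ 2) := by
  simp only [normSq, entrySum, mul_add]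
  gcongr <;> exact sum_apply_sq_le_card_mul_norm_sq _

end EntrySum

/-- Proposition 6.1 in real components: with `s(u) = Σᵢ uᵢ`, for real
component vectors of commutative quaternion vectors `x ∈ ℍ^{n₁}`, `y ∈ ℍ^{n₂}`,
`z ∈ ℍ^{n₃}` on the quaternion unit spheres (`Σₜ‖xₜ‖² = Σₜ‖yₜ‖² = Σₜ‖zₜ‖² = 1`), the
16-term expression `Re F(x,y,z)` for the all-ones tensor is at most `2√(n₁n₂n₃)`. -/
theorem stmt_18 (n₁ n₂ n₃ : ℕ) (h₁ : 1 ≤ n₁) (h₂ : 1 ≤ n₂) (h₃ : 1 ≤ n₃)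
    (x₀ x₁ x₂ x₃ : EuclideanSpace ℝ (Fin n₁))
    (y₀ y₁ y₂ y₃ : EuclideanSpace ℝ (Fin n₂))
    (z₀ z₁ z₂ z₃ : EuclideanSpace ℝ (Fin n₃))
    (hx : ‖x₀‖ ^ 2 + ‖x₁‖ ^ 2 + ‖x₂‖ ^ 2 + ‖x₃‖ ^ 2 = 1)
    (hy : ‖y₀‖ ^ 2 + ‖y₁‖ ^ 2 + ‖y₂‖ ^ 2 + ‖y₃‖ ^ 2 = 1)
    (hz : ‖z₀‖ ^ 2 + ‖z₁‖ ^ 2 + ‖z₂‖ ^ 2 + ‖z₃‖ ^ 2 = 1) :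
    (∑ i, x₀ i) * (∑ j, y₀ j) * (∑ k, z₀ k) - (∑ i, x₁ i) * (∑ j, y₁ j) * (∑ k, z₀ k)
      + (∑ i, x₂ i) * (∑ j, y₂ j) * (∑ k, z₀ k) - (∑ i, x₃ i) * (∑ j, y₃ j) * (∑ k, z₀ k)
      - (∑ i, x₁ i) * (∑ j, y₀ j) * (∑ k, z₁ k) - (∑ i, x₀ i) * (∑ j, y₁ j) * (∑ k, z₁ k)
      - (∑ i, x₃ i) * (∑ j, y₂ j) * (∑ k, z₁ k) - (∑ i, x₂ i) * (∑ j, y₃ j) * (∑ k, z₁ k)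
      + (∑ i, x₂ i) * (∑ j, y₀ j) * (∑ k, z₂ k) - (∑ i, x₃ i) * (∑ j, y₁ j) * (∑ k, z₂ k)
      + (∑ i, x₀ i) * (∑ j, y₂ j) * (∑ k, z₂ k) - (∑ i, x₁ i) * (∑ j, y₃ j) * (∑ k, z₂ k)
      - (∑ i, x₃ i) * (∑ j, y₀ j) * (∑ k, z₃ k) - (∑ i, x₂ i) * (∑ j, y₁ j) * (∑ k, z₃ k)
      - (∑ i, x₁ i) * (∑ j, y₂ j) * (∑ k, z₃ k) - (∑ i, x₀ i) * (∑ j, y₃ j) * (∑ k, z₃ k)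
      ≤ 2 * Real.sqrt (n₁ * n₂ * n₃) := by
  let a := CommQuaternion.entrySum x₀ x₁ x₂ x₃
  let b := CommQuaternion.entrySum y₀ y₁ y₂ y₃
  let c := CommQuaternion.entrySum z₀ z₁ z₂ z₃
  have ha : a.normSq ≤ n₁ := by
    simpa only [hx, mul_one, Fintype.card_fin] using CommQuaternion.normSq_entrySum_le x₀ x₁ x₂ x₃
  have hb : b.normSq ≤ n₂ := by
    simpa only [hy, mul_one, Fintype.card_fin] using CommQuaternion.normSq_entrySum_le y₀ y₁ y₂ y₃
  have hc : c.normSq ≤ n₃ := by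
    simpa only [hz, mul_one, Fintype.card_fin] using CommQuaternion.normSq_entrySum_le z₀ z₁ z₂ z₃
  calc
    _ = (a * b * c).re := by
      simp only [a, b, c, CommQuaternion.entrySum, CommQuaternion.re_mul, CommQuaternion.imI_mul,
        CommQuaternion.imJ_mul, CommQuaternion.imK_mul]
      ring
    _ ≤ 2 * √(a.normSq * b.normSq * c.normSq) := CommQuaternion.re_mul_mul_le_two_mul_sqrt a b c
    _ ≤ 2 * √(n₁ * n₂ * n₃) := by
      have hb₀ := b.normSq_nonneg
      have hc₀ := c.normSq_nonneg
      gcongr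
end
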